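/- Let q ∈ (1,2], γ > 0, let H be an n×n contraction (H*H ≤ I), let X be an n×n positive definite matrix with Tr(X) = γ, and let B be an n×n Hermitian matrix with log_q(X) > H B H* and B > −(1/(q−1)) I. Then S_{H,q}(X | exp_q(B)) equals the supremum, over all n×n positive definite matrices A, of Tr(X^{2−q} A) − γ · log_q(γ^{−1} Tr exp_q(A + H B H*)) − γ + Tr exp_q(B), and this supremum is attained (at A₀ = log_q(X) − H B H*). -/

import Mathlib

open Matrix ComplexOrder

/-- Matrix logarithm of a (positive definite) Hermitian matrix, via functional calculus. -/
noncomputable def mlog {n : ℕ} (A : Matrix (Fin n) (Fin n) ℂ) : Matrix (Fin n) (Fin n) ℂ :=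
  cfc Real.log A

/-- Matrix exponential of a Hermitian matrix, via functional calculus. -/
noncomputable def mexp {n : ℕ} (A : Matrix (Fin n) (Fin n) ℂ) : Matrix (Fin n) (Fin n) ℂ :=
  cfc Real.exp A

/-- Real power of a (positive definite) Hermitian matrix, via functional calculus. -/
noncomputable def mpow {n : ℕ} (A : Matrix (Fin n) (Fin n) ℂ) (p : ℝ) : Matrix (Fin n) (Fin n) ℂ :=
  cfc (fun x : ℝ => x ^ p) A

/-- Deformed logarithm `log_q x = (x^(q-1) - 1)/(q-1)`. -/
noncomputable def logq (q x : ℝ) : ℝ := (x ^ (q - 1) - 1) / (q - 1)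

/-- Deformed exponential `exp_q x = (1 + (q-1)x)^(1/(q-1))`, with `exp_1 = exp`. -/
noncomputable def expq (q x : ℝ) : ℝ :=
  if q = 1 then Real.exp x else (1 + (q - 1) * x) ^ (1 / (q - 1))

/-- Deformed logarithm of a positive definite matrix, via functional calculus. -/
noncomputable def mlogq {n : ℕ} (q : ℝ) (A : Matrix (Fin n) (Fin n) ℂ) :
    Matrix (Fin n) (Fin n) ℂ :=
  cfc (logq q) A

/-- Deformed exponential of a Hermitian matrix, via functional calculus. -/
noncomputable def mexpq {m : ℕ} (q : ℝ) (A : Matrix (Fin m) (Fin m) ℂ) :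
    Matrix (Fin m) (Fin m) ℂ :=
  cfc (expq q) A

/-- Real part of the trace. -/
noncomputable def trRe {n : ℕ} (M : Matrix (Fin n) (Fin n) ℂ) : ℝ := (Matrix.trace M).re

/-- The reduced relative entropy `S_H(A | B) = Tr[A log A - H* A H log B - A + B]`. -/
noncomputable def SH {n : ℕ} (H A B : Matrix (Fin n) (Fin n) ℂ) : ℝ :=
  trRe (A * mlog A - Hᴴ * A * H * mlog B - A + B)

/-- The reduced Tsallis relative entropy
`S_{H,q}(A | B) = Tr[A^(2-q) log_q A - H* A^(2-q) H log_q B - A + B]`. -/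
noncomputable def STq {n : ℕ} (H : Matrix (Fin n) (Fin n) ℂ) (q : ℝ)
    (A B : Matrix (Fin n) (Fin n) ℂ) : ℝ :=
  trRe (mpow A (2 - q) * mlogq q A - Hᴴ * mpow A (2 - q) * H * mlogq q B - A + B)


section TraceInequality

variable {n : ℕ} {X Y : Matrix (Fin n) (Fin n) ℂ}

theorem trRe_add (M N : Matrix (Fin n) (Fin n) ℂ) : trRe (M + N) = trRe M + trRe N := by
  simp [trRe]

theorem trRe_sub (M N : Matrix (Fin n) (Fin n) ℂ) : trRe (M - N) = trRe M - trRe N := by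
  simp [trRe]

/-- The trace of `f(X)` is the sum of `f` over the eigenvalues of `X`. -/
theorem trRe_cfc (hX : X.IsHermitian) (f : ℝ → ℝ) :
    trRe (cfc f X) = ∑ i, f (hX.eigenvalues i) := by
  rw [hX.cfc_eq, IsHermitian.cfc, Unitary.conjStarAlgAut_apply, trRe, Matrix.trace_mul_comm,
    ← mul_assoc, Unitary.coe_star_mul_self, one_mul, Matrix.trace_diagonal]
  simp

/-- The transition weights between the eigenbases of two Hermitian matrices. -/
noncomputable def eigenWeight (hX : X.IsHermitian) (hY : Y.IsHermitian) (i j : Fin n) : ℝ :=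
  Complex.normSq
    ((star (hX.eigenvectorUnitary : Matrix (Fin n) (Fin n) ℂ) * hY.eigenvectorUnitary) i j)

theorem eigenWeight_nonneg (hX : X.IsHermitian) (hY : Y.IsHermitian) (i j : Fin n) :
    0 ≤ eigenWeight hX hY i j := Complex.normSq_nonneg _

theorem sum_normSq_row {W : Matrix (Fin n) (Fin n) ℂ} (hW : W * star W = 1) (i : Fin n) :
    ∑ j, Complex.normSq (W i j) = 1 := by
  have h := congrFun (congrFun hW i) i
  rw [Matrix.mul_apply, Matrix.one_apply_eq] at h
  simp only [Matrix.star_apply, Complex.star_def, Complex.mul_conj] at h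
  exact_mod_cast h

theorem sum_normSq_col {W : Matrix (Fin n) (Fin n) ℂ} (hW : star W * W = 1) (j : Fin n) :
    ∑ i, Complex.normSq (W i j) = 1 := by
  have h := congrFun (congrFun hW j) j
  rw [Matrix.mul_apply, Matrix.one_apply_eq] at h
  simp only [Matrix.star_apply, Complex.star_def, ← Complex.normSq_eq_conj_mul_self] at h
  exact_mod_cast h

theorem sum_eigenWeight_row (hX : X.IsHermitian) (hY : Y.IsHermitian) (i : Fin n) :
    ∑ j, eigenWeight hX hY i j = 1 :=
  sum_normSq_row (Unitary.mul_star_self_of_mem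
    (star hX.eigenvectorUnitary * hY.eigenvectorUnitary).2) i

theorem sum_eigenWeight_col (hX : X.IsHermitian) (hY : Y.IsHermitian) (j : Fin n) :
    ∑ i, eigenWeight hX hY i j = 1 :=
  sum_normSq_col (Unitary.star_mul_self_of_mem
    (star hX.eigenvectorUnitary * hY.eigenvectorUnitary).2) j

theorem trRe_cfc_mul_cfc (hX : X.IsHermitian) (hY : Y.IsHermitian) (f g : ℝ → ℝ) :
    trRe (cfc f X * cfc g Y) =
      ∑ i, ∑ j, eigenWeight hX hY i j * (f (hX.eigenvalues i) * g (hY.eigenvalues j)) := by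
  rw [hX.cfc_eq, hY.cfc_eq, IsHermitian.cfc, IsHermitian.cfc, Unitary.conjStarAlgAut_apply,
    Unitary.conjStarAlgAut_apply]
  simp only [eigenWeight]
  generalize (hX.eigenvectorUnitary : Matrix (Fin n) (Fin n) ℂ) = U
  generalize (hY.eigenvectorUnitary : Matrix (Fin n) (Fin n) ℂ) = V
  generalize hD : (RCLike.ofReal ∘ f ∘ hX.eigenvalues : Fin n → ℂ) = d
  generalize hE : (RCLike.ofReal ∘ g ∘ hY.eigenvalues : Fin n → ℂ) = e
  have hcyc : Matrix.trace (U * diagonal d * star U * (V * diagonal e * star V)) =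
      Matrix.trace (diagonal d * (star U * V) * diagonal e * star (star U * V)) := by
    rw [star_mul, star_star, mul_assoc U, mul_assoc U, Matrix.trace_mul_comm]
    simp only [mul_assoc]
  rw [trRe, hcyc]
  generalize star U * V = W
  simp only [Matrix.trace, Matrix.diag_apply, Complex.re_sum]
  refine Finset.sum_congr rfl fun i _ => ?_
  rw [Matrix.mul_apply, Complex.re_sum]
  refine Finset.sum_congr rfl fun j _ => ?_
  rw [Matrix.mul_diagonal, Matrix.diagonal_mul, Matrix.star_apply, ← hD, ← hE]
  simp [Complex.normSq_apply]
  ring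

/-- A scalar inequality `f(x) g(y) ≤ F(x) + G(y)` on the spectra passes to traces. -/
theorem trRe_cfc_mul_cfc_le (hX : X.IsHermitian) (hY : Y.IsHermitian) {f g F G : ℝ → ℝ}
    (h : ∀ x ∈ spectrum ℝ X, ∀ y ∈ spectrum ℝ Y, f x * g y ≤ F x + G y) :
    trRe (cfc f X * cfc g Y) ≤ trRe (cfc F X) + trRe (cfc G Y) := by
  have hF : trRe (cfc F X) = ∑ i, ∑ j, eigenWeight hX hY i j * F (hX.eigenvalues i) := by
    simp only [← Finset.sum_mul, sum_eigenWeight_row, one_mul, trRe_cfc hX]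
  have hG : trRe (cfc G Y) = ∑ i, ∑ j, eigenWeight hX hY i j * G (hY.eigenvalues j) := by
    rw [Finset.sum_comm]
    simp only [← Finset.sum_mul, sum_eigenWeight_col, one_mul, trRe_cfc hY]
  rw [hF, hG, trRe_cfc_mul_cfc hX hY]
  simp only [← Finset.sum_add_distrib, ← mul_add]
  exact Finset.sum_le_sum fun i _ => Finset.sum_le_sum fun j _ =>
    mul_le_mul_of_nonneg_left (h _ (hX.eigenvalues_mem_spectrum_real i) _
      (hY.eigenvalues_mem_spectrum_real j)) (eigenWeight_nonneg hX hY i j)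

theorem trRe_cfc_pos [NeZero n] (hX : X.IsHermitian) {f : ℝ → ℝ}
    (h : ∀ x ∈ spectrum ℝ X, 0 < f x) : 0 < trRe (cfc f X) := by
  rw [trRe_cfc hX]
  exact Finset.sum_pos (fun i _ => h _ (hX.eigenvalues_mem_spectrum_real i))
    Finset.univ_nonempty

end TraceInequality

section Matrices

variable {n : ℕ}

theorem spectrum_pos_of_posDef {X : Matrix (Fin n) (Fin n) ℂ} (hX : X.PosDef) {x : ℝ}
    (hx : x ∈ spectrum ℝ X) : 0 < x := by
  rw [hX.1.spectrum_real_eq_range_eigenvalues] at hx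
  obtain ⟨i, rfl⟩ := hx
  exact hX.eigenvalues_pos i

theorem spectrum_add_pos {X : Matrix (Fin n) (Fin n) ℂ} {s : ℝ}
    (hX : (X + s • (1 : Matrix (Fin n) (Fin n) ℂ)).PosDef) {x : ℝ}
    (hx : x ∈ spectrum ℝ X) : 0 < x + s := by
  refine spectrum_pos_of_posDef hX ?_
  rw [add_comm X, ← Algebra.algebraMap_eq_smul_one]
  exact spectrum.add_mem_add_iff.mpr hx

/-- The adjoint of a contraction is a contraction. -/
theorem posSemidef_one_sub_mul_conjTranspose {H : Matrix (Fin n) (Fin n) ℂ}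
    (hH : (1 - Hᴴ * H).PosSemidef) : (1 - H * Hᴴ).PosSemidef := by
  let _ : Invertible (1 : Matrix (Fin n) (Fin n) ℂ) := invertibleOne
  have h₁ := PosDef.fromBlocks₁₁ H (1 : Matrix (Fin n) (Fin n) ℂ)
    (PosDef.one : (1 : Matrix (Fin n) (Fin n) ℂ).PosDef)
  have h₂ := PosDef.fromBlocks₂₂ (1 : Matrix (Fin n) (Fin n) ℂ) H
    (PosDef.one : (1 : Matrix (Fin n) (Fin n) ℂ).PosDef)
  simp only [inv_one, mul_one] at h₁ h₂
  exact h₂.mp (h₁.mpr hH)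

theorem posSemidef_conj_add_smul_one {H B : Matrix (Fin n) (Fin n) ℂ} {s : ℝ} (hs : 0 ≤ s)
    (hH : (1 - Hᴴ * H).PosSemidef)
    (hB : (B + s • (1 : Matrix (Fin n) (Fin n) ℂ)).PosSemidef) :
    (H * B * Hᴴ + s • (1 : Matrix (Fin n) (Fin n) ℂ)).PosSemidef := by
  have h := (hB.mul_mul_conjTranspose_same H).add
    ((posSemidef_one_sub_mul_conjTranspose hH).smul hs)
  convert h using 1
  simp only [mul_add, add_mul, smul_sub, mul_smul_comm, smul_mul_assoc, mul_one]
  abel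

theorem cfc_cfc_of_leftInverse {X : Matrix (Fin n) (Fin n) ℂ} (hX : X.IsHermitian) {f g : ℝ → ℝ}
    (h : ∀ x ∈ spectrum ℝ X, g (f x) = x) : cfc g (cfc f X) = X := by
  have hfin : (spectrum ℝ X).Finite := Matrix.finite_real_spectrum
  have hsa : IsSelfAdjoint X := hX
  rw [← cfc_comp g f X hsa ((hfin.image f).continuousOn g) (hfin.continuousOn f),
    cfc_congr (f := g ∘ f) (g := id) h, cfc_id ℝ X]

end Matrices

section Deformed

variable {q : ℝ}

theorem logq_one (q : ℝ) : logq q 1 = 0 := by simp [logq]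

theorem expq_pos (hq : 1 < q) {x : ℝ} (hx : 0 < x + 1 / (q - 1)) : 0 < expq q x := by
  have hp : 0 < q - 1 := sub_pos.mpr hq
  rw [expq, if_neg hq.ne']
  apply Real.rpow_pos_of_pos
  have := mul_pos hp hx
  field_simp at this
  linarith

theorem expq_rpow (hq : 1 < q) {x : ℝ} (hx : 0 < x + 1 / (q - 1)) :
    expq q x ^ (q - 1) = 1 + (q - 1) * x := by
  have hp : 0 < q - 1 := sub_pos.mpr hq
  have hpos : 0 < 1 + (q - 1) * x := by
    have := mul_pos hp hx
    field_simp at this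
    linarith
  rw [expq, if_neg hq.ne', ← Real.rpow_mul hpos.le, one_div_mul_cancel hp.ne', Real.rpow_one]

theorem logq_expq (hq : 1 < q) {x : ℝ} (hx : 0 < x + 1 / (q - 1)) : logq q (expq q x) = x := by
  have hp : q - 1 ≠ 0 := (sub_pos.mpr hq).ne'
  rw [logq, expq_rpow hq hx]
  field_simp
  ring

theorem expq_logq (hq : 1 < q) {x : ℝ} (hx : 0 < x) : expq q (logq q x) = x := by
  have hp : q - 1 ≠ 0 := (sub_pos.mpr hq).ne'
  have h : 1 + (q - 1) * logq q x = x ^ (q - 1) := by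
    rw [logq]
    field_simp
    ring
  rw [expq, if_neg hq.ne', h, ← Real.rpow_mul hx.le, mul_one_div_cancel hp, Real.rpow_one]

/-- The scalar Young-type inequality behind the trace inequality. -/
theorem rpow_mul_le_young (hq : q ∈ Set.Ioc (1 : ℝ) 2) {t x c : ℝ} (ht : 0 < t) (hx : 0 < x)
    (hc : 0 < c + 1 / (q - 1)) :
    x ^ (2 - q) * c ≤ (x ^ (2 - q) * logq q x + (t ^ (q - 1) * (2 - q) - 1) / (q - 1) * x)
      + t ^ (q - 1) / t * expq q c := by
  have hp : 0 < q - 1 := sub_pos.mpr hq.1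
  have hy := expq_pos hq.1 hc
  have hyoung := Real.geom_mean_le_arith_mean2_weighted (w₁ := 2 - q) (w₂ := q - 1)
    (p₁ := x) (p₂ := expq q c / t) (by linarith [hq.2]) hp.le hx.le (by positivity) (by ring)
  rw [Real.div_rpow hy.le ht.le, expq_rpow hq.1 hc] at hyoung
  have htp : 0 < t ^ (q - 1) := Real.rpow_pos_of_pos ht _
  have hxx : x ^ (2 - q) * x ^ (q - 1) = x := by
    rw [← Real.rpow_add hx]; norm_num
  have hkey := mul_le_mul_of_nonneg_left hyoung (div_pos htp hp).le
  have hl : t ^ (q - 1) / (q - 1) * (x ^ (2 - q) * ((1 + (q - 1) * c) / t ^ (q - 1))) =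
      x ^ (2 - q) / (q - 1) + x ^ (2 - q) * c := by
    field_simp
  have hr : t ^ (q - 1) / (q - 1) * ((2 - q) * x + (q - 1) * (expq q c / t)) =
      t ^ (q - 1) * (2 - q) / (q - 1) * x + t ^ (q - 1) / t * expq q c := by
    field_simp
  have hlog : x ^ (2 - q) * logq q x = x / (q - 1) - x ^ (2 - q) / (q - 1) := by
    rw [logq, mul_div_assoc', mul_sub, hxx, mul_one, sub_div]
  rw [hl, hr] at hkey
  rw [hlog, sub_div, sub_mul, one_div_mul_eq_div]
  linarith

end Deformed

/-- Trace inequality: for `X > 0` and Hermitian `C > -1/(q-1)`,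
`Tr X^(2-q) C ≤ Tr X^(2-q) log_q X + Tr X · log_q (Tr exp_q C / Tr X)`. -/
theorem trRe_mpow_mul_le {n : ℕ} [NeZero n] {q : ℝ} (hq : q ∈ Set.Ioc (1 : ℝ) 2)
    {X C : Matrix (Fin n) (Fin n) ℂ} (hX : X.PosDef) (hC : C.IsHermitian)
    (hdom : (C + ((1 / (q - 1) : ℝ)) • (1 : Matrix (Fin n) (Fin n) ℂ)).PosDef) :
    trRe (mpow X (2 - q) * C) ≤ trRe (mpow X (2 - q) * mlogq q X)
      + trRe X * logq q ((trRe X)⁻¹ * trRe (mexpq q C)) := by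
  have hp : 0 < q - 1 := sub_pos.mpr hq.1
  have hid (M : Matrix (Fin n) (Fin n) ℂ) (hM : M.IsHermitian) : cfc (id : ℝ → ℝ) M = M :=
    cfc_id ℝ M (ha := hM)
  have hγ : 0 < trRe X := by
    rw [← hid X hX.1]
    exact trRe_cfc_pos hX.1 fun x hx => spectrum_pos_of_posDef hX hx
  have hY : 0 < trRe (mexpq q C) :=
    trRe_cfc_pos hC fun x hx => expq_pos hq.1 (spectrum_add_pos hdom hx)
  set t := (trRe X)⁻¹ * trRe (mexpq q C) with ht
  have htpos : 0 < t := by positivity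
  have hle := trRe_cfc_mul_cfc_le hX.1 hC (f := fun x => x ^ (2 - q)) (g := id)
    (F := fun x => x ^ (2 - q) * logq q x + (t ^ (q - 1) * (2 - q) - 1) / (q - 1) * x)
    (G := fun c => t ^ (q - 1) / t * expq q c)
    fun x hx c hc => rpow_mul_le_young hq htpos (spectrum_pos_of_posDef hX hx)
      (spectrum_add_pos hdom hc)
  have hlog : trRe (mpow X (2 - q) * mlogq q X) =
      ∑ i, hX.1.eigenvalues i ^ (2 - q) * logq q (hX.1.eigenvalues i) := by
    have hfin : (spectrum ℝ X).Finite := Matrix.finite_real_spectrum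
    rw [mpow, mlogq, ← cfc_mul _ _ X (hfin.continuousOn _) (hfin.continuousOn _), trRe_cfc hX.1]
  have htr : trRe X = ∑ i, hX.1.eigenvalues i := by
    conv_lhs => rw [← hid X hX.1, trRe_cfc hX.1]
    rfl
  have hexp : trRe (mexpq q C) = ∑ i, expq q (hC.eigenvalues i) := trRe_cfc hC _
  rw [hid C hC, trRe_cfc hX.1, trRe_cfc hC, Finset.sum_add_distrib, ← Finset.mul_sum,
    ← Finset.mul_sum, ← hlog, ← htr, ← hexp] at hle
  have hYt : trRe (mexpq q C) = t * trRe X := by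
    rw [ht]; field_simp
  refine hle.trans_eq ?_
  rw [hYt, logq]
  field_simp
  ring

/-- One-parameter variational expression (ii) for the reduced Tsallis relative entropy. -/
theorem stmt15 {n : ℕ} (q : ℝ) (hq : q ∈ Set.Ioc (1 : ℝ) 2) (γ : ℝ) (hγ : 0 < γ)
    (H X B : Matrix (Fin n) (Fin n) ℂ) (hH : (1 - Hᴴ * H).PosSemidef)
    (hX : X.PosDef) (hTr : Matrix.trace X = (γ : ℂ)) (hB : B.IsHermitian)
    (hXB : (mlogq q X - H * B * Hᴴ).PosDef)
    (hBdom : (B + ((1 / (q - 1) : ℝ)) • (1 : Matrix (Fin n) (Fin n) ℂ)).PosDef) :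
    IsGreatest
      {r : ℝ | ∃ A : Matrix (Fin n) (Fin n) ℂ, A.PosDef ∧
        r = trRe (mpow X (2 - q) * A)
              - γ * logq q (γ⁻¹ * trRe (mexpq q (A + H * B * Hᴴ))) - γ + trRe (mexpq q B)}
      (STq H q X (mexpq q B)) := by
  have hγX : trRe X = γ := by simp [trRe, hTr]
  have hn : NeZero n := ⟨by
    rintro rfl
    exact hγ.ne (by simpa [trRe] using hγX)⟩
  have hlogB : mlogq q (mexpq q B) = B :=
    cfc_cfc_of_leftInverse hB fun x hx => logq_expq hq.1 (spectrum_add_pos hBdom hx)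
  have hexpX : mexpq q (mlogq q X) = X :=
    cfc_cfc_of_leftInverse hX.1 fun x hx => expq_logq hq.1 (spectrum_pos_of_posDef hX hx)
  have hcyc : trRe (Hᴴ * mpow X (2 - q) * H * B) = trRe (mpow X (2 - q) * (H * B * Hᴴ)) := by
    rw [trRe, trRe, mul_assoc, mul_assoc, Matrix.trace_mul_comm]
    simp only [mul_assoc]
  have hST : STq H q X (mexpq q B) = trRe (mpow X (2 - q) * mlogq q X)
      - trRe (mpow X (2 - q) * (H * B * Hᴴ)) - γ + trRe (mexpq q B) := by
    rw [STq, hlogB, trRe_add, trRe_sub, trRe_sub, hcyc, hγX]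
  refine ⟨⟨mlogq q X - H * B * Hᴴ, hXB, ?_⟩, ?_⟩
  · rw [sub_add_cancel, hexpX, hγX, inv_mul_cancel₀ hγ.ne', logq_one, hST, mul_sub, trRe_sub]
    ring
  · rintro r ⟨A, hA, rfl⟩
    have hs : 0 ≤ 1 / (q - 1) := one_div_nonneg.mpr (sub_pos.mpr hq.1).le
    have hdom := hA.add_posSemidef (posSemidef_conj_add_smul_one hs hH hBdom.posSemidef)
    rw [← add_assoc] at hdom
    have hle := trRe_mpow_mul_le hq hX
      (hA.1.add (isHermitian_mul_mul_conjTranspose H hB)) hdom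
    rw [mul_add, trRe_add, hγX] at hle
    rw [hST]
    linarith
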